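/- arXiv:physics/0605086 — 3 statements merged into one kernel-verified Lean document; each statement's English description precedes it below -/
import Mathlib

section
/- Let T > 0 and let f : [0,T] × ℝ → ℝ be a continuous function which is locally Lipschitz in its second argument uniformly in the first: for every interval [a,b] ⊂ ℝ there exists a constant C such that |f(s,x) − f(s,y)| ≤ C|x − y| for all x, y ∈ [a,b] and all s ∈ [0,T]. Let x : [0,T] → ℝ be absolutely continuous with x'(t) ≤ f(t, x(t)) for almost every t ∈ [0,T], and let y : [0,T] → ℝ be a solution of the ODE y'(t) = f(t, y(t)) on [0,T]. If x(0) ≤ y(0), then x(t) ≤ y(t) for all t ∈ [0,T]. -/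
open MeasureTheory Set

/-!
Write `w = x - y` and suppose `w t > 0` for some `t`. Let `s` be the last time before `t` with
`w s ≤ 0`, so that `w > 0` on `(s, t]`. On a compact interval containing the values of `x` and `y`,
`f` is `K`-Lipschitz in its second argument. Restrict to `[s, e]` with `K * (e - s) ≤ 1 / 2` and
let `m` be a maximum point of `w` there. Almost everywhere on `(s, m]`,
`x' ≤ f (·, x) ≤ f (·, y) + K * w ≤ f (·, y) + K * w m`; integrating over `[s, m]` gives
`w m ≤ w s + K * (m - s) * w m ≤ w m / 2`, contradicting `w m > 0`.
-/

/-- Classical comparison theorem for scalar ODEs: if `x` is absolutely continuous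
(encoded via the fundamental theorem of calculus with an integrable a.e. derivative `x'`)
and satisfies the differential inequality `x' t ≤ f t (x t)` a.e., `y` solves
`y' = f t (y t)` on `[0,T]`, `f` is continuous and locally Lipschitz in its second
argument uniformly in the first, and `x 0 ≤ y 0`, then `x t ≤ y t` on `[0,T]`. -/
theorem ode_comparison
    (T : ℝ) (hT : 0 < T)
    (f : ℝ → ℝ → ℝ)
    (hf_cont : ContinuousOn (fun p : ℝ × ℝ => f p.1 p.2) (Icc 0 T ×ˢ (univ : Set ℝ)))
    (hf_lip : ∀ a b : ℝ, ∃ C : ℝ, ∀ s ∈ Icc (0:ℝ) T, ∀ u ∈ Icc a b, ∀ v ∈ Icc a b,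
        |f s u - f s v| ≤ C * |u - v|)
    (x y x' : ℝ → ℝ)
    (hx_cont : ContinuousOn x (Icc 0 T))
    (hx'int : IntervalIntegrable x' volume 0 T)
    (hx_ftc : ∀ t ∈ Icc (0:ℝ) T, x t = x 0 + ∫ τ in (0:ℝ)..t, x' τ)
    (hx_ineq : ∀ᵐ t ∂volume, t ∈ Icc (0:ℝ) T → x' t ≤ f t (x t))
    (hy : ∀ t ∈ Icc (0:ℝ) T, HasDerivWithinAt y (f t (y t)) (Icc 0 T) t)
    (h0 : x 0 ≤ y 0) :
    ∀ t ∈ Icc (0:ℝ) T, x t ≤ y t := by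
  intro t ht
  by_contra! hlt
  have hy_cont : ContinuousOn y (Icc 0 T) := fun r hr => (hy r hr).continuousWithinAt
  have hw_cont : ContinuousOn (fun r => x r - y r) (Icc 0 T) := hx_cont.sub hy_cont
  -- `s` is the last time in `[0, t]` at which `x ≤ y`.
  obtain ⟨s, ⟨⟨hs0, hst⟩, hws⟩, hs_max⟩ :
      ∃ s, IsGreatest (Icc 0 t ∩ (fun r => x r - y r) ⁻¹' Iic 0) s := by
    refine IsCompact.exists_isGreatest ?_ ⟨0, ⟨le_rfl, ht.1⟩, by simpa using h0⟩
    exact isCompact_Icc.of_isClosed_subset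
      ((hw_cont.mono (Icc_subset_Icc_right ht.2)).preimage_isClosed_of_isClosed
        isClosed_Icc isClosed_Iic) inter_subset_left
  have hws : x s - y s ≤ 0 := hws
  have hst : s < t := by
    rcases hst.lt_or_eq with h | h
    · exact h
    · subst h; linarith
  have hpos : ∀ r, s < r → r ≤ t → 0 < x r - y r := by
    intro r hsr hrt
    by_contra! h
    exact absurd (hs_max ⟨⟨hs0.trans hsr.le, hrt⟩, h⟩) (not_le.2 hsr)
  -- A single Lipschitz constant valid on a compact interval containing both graphs.
  obtain ⟨A, hA⟩ := (isCompact_Icc.exists_bound_of_continuousOn hx_cont)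
  obtain ⟨B, hB⟩ := (isCompact_Icc.exists_bound_of_continuousOn hy_cont)
  obtain ⟨C, hC⟩ := hf_lip (-max A B) (max A B)
  have hxmem : ∀ r ∈ Icc (0:ℝ) T, x r ∈ Icc (-max A B) (max A B) := fun r hr =>
    abs_le.1 ((hA r hr).trans (le_max_left _ _))
  have hymem : ∀ r ∈ Icc (0:ℝ) T, y r ∈ Icc (-max A B) (max A B) := fun r hr =>
    abs_le.1 ((hB r hr).trans (le_max_right _ _))
  set K := max C 1 with hK
  have hK1 : 1 ≤ K := le_max_right _ _
  have hK0 : 0 < K := by linarith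
  -- On `[s, e]` the Grönwall factor `K * (e - s)` is at most `1 / 2`.
  set e := min t (s + 1 / (2 * K)) with he
  have hse : s < e := lt_min hst (by have : 0 < 1 / (2 * K) := by positivity
                                     linarith)
  have het : e ≤ t := min_le_left _ _
  have heT : Icc s e ⊆ Icc 0 T := Icc_subset_Icc hs0 (het.trans ht.2)
  obtain ⟨m, hm, hm_max⟩ :=
    isCompact_Icc.exists_isMaxOn (nonempty_Icc.2 hse.le) (hw_cont.mono heT)
  have hwm : 0 < x m - y m := (hpos e hse het).trans_le (hm_max (right_mem_Icc.2 hse.le))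
  have hsm : s ≤ m := hm.1
  have hsmT : Icc s m ⊆ Icc 0 T := (Icc_subset_Icc_right hm.2).trans heT
  have hsT : s ∈ Icc 0 T := hsmT (left_mem_Icc.2 hsm)
  have hmT : m ∈ Icc 0 T := hsmT (right_mem_Icc.2 hsm)
  have hfy : ContinuousOn (fun r => f r (y r)) (Icc 0 T) :=
    hf_cont.comp (continuousOn_id.prodMk hy_cont) fun r hr => ⟨hr, mem_univ _⟩
  have hfyint : IntervalIntegrable (fun r => f r (y r)) volume s m :=
    (hfy.mono hsmT).intervalIntegrable_of_Icc hsm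
  have hsub : ∀ r ∈ Icc (0:ℝ) T, IntervalIntegrable x' volume 0 r := fun r hr =>
    hx'int.mono_set (by rw [uIcc_of_le hr.1, uIcc_of_le hT.le]; exact Icc_subset_Icc_right hr.2)
  have hxint : IntervalIntegrable x' volume s m := (hsub s hsT).symm.trans (hsub m hmT)
  have hxs : ∫ r in s..m, x' r = x m - x s := by
    rw [hx_ftc m hmT, hx_ftc s hsT,
      ← intervalIntegral.integral_interval_sub_left (hsub m hmT) (hsub s hsT)]
    ring
  have hys : ∫ r in s..m, f r (y r) = y m - y s := by
    refine intervalIntegral.integral_eq_sub_of_hasDerivAt_of_le hsm (hy_cont.mono hsmT) ?_ hfyint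
    intro r hr
    refine (hy r (hsmT (Ioo_subset_Icc_self hr))).hasDerivAt (Icc_mem_nhds ?_ ?_)
    · exact hs0.trans_lt hr.1
    · exact hr.2.trans_le hmT.2
  have hmono : ∫ r in s..m, x' r ≤ ∫ r in s..m, (f r (y r) + K * (x m - y m)) := by
    have hint : IntervalIntegrable (fun r => f r (y r) + K * (x m - y m)) volume s m :=
      hfyint.add intervalIntegrable_const
    rw [intervalIntegral.integral_of_le hsm, intervalIntegral.integral_of_le hsm]
    refine setIntegral_mono_on_ae hxint.1 hint.1 measurableSet_Ioc ?_
    filter_upwards [hx_ineq] with r hr hrs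
    have hrT := hsmT (Ioc_subset_Icc_self hrs)
    have hre : r ∈ Icc s e := ⟨hrs.1.le, hrs.2.trans hm.2⟩
    have hwr : 0 < x r - y r := hpos r hrs.1 (hre.2.trans het)
    have hle : x r - y r ≤ x m - y m := hm_max hre
    have h2 := (le_abs_self _).trans (hC r hrT _ (hxmem r hrT) _ (hymem r hrT))
    rw [abs_of_pos hwr] at h2
    have h3 : C * (x r - y r) ≤ K * (x m - y m) :=
      mul_le_mul (le_max_left _ _) hle hwr.le hK0.le
    linarith [hr hrT]
  rw [intervalIntegral.integral_add hfyint intervalIntegrable_const, hxs, hys,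
    intervalIntegral.integral_const, smul_eq_mul] at hmono
  have hlen : (m - s) * K ≤ 1 / 2 := by
    have h1 : m - s ≤ 1 / (2 * K) := by linarith [hm.2.trans (min_le_right _ _)]
    calc (m - s) * K ≤ 1 / (2 * K) * K := by gcongr
      _ = 1 / 2 := by field_simp
  have := mul_le_mul_of_nonneg_right hlen hwm.le
  linarith
end

section
/- Let x : [0,∞) → [0,∞) be an absolutely continuous function with x(0) > 0 which satisfies, for almost every t ≥ 0, the differential inequality x'(t) ≤ Δ₀·x(t) + F·x(t)^{n₁} − E·x(t)^{n₂}, where Δ₀, F, E > 0 are constants and n₁, n₂ are real exponents with 1 < n₁ < n₂. Then limsup_{t→∞} x(t) ≤ (4Δ₀/E)^{1/(n₂−1)} + (2F/E)^{1/(n₂−n₁)}. -/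
/-!
Write `R = (4Δ₀/E)^{1/(n₂−1)} + (2F/E)^{1/(n₂−n₁)}`. For `y ≥ R` each summand of `R` is a lower bound
for `y`, so `4Δ₀ y ≤ E y^{n₂}` and `2F y^{n₁} ≤ E y^{n₂}`; hence the right-hand side of the differential
inequality is at most `−E y^{n₂}/4 ≤ −Δ₀ y ≤ −Δ₀ R < 0` (`rhs_le_neg`). Thus `x` decreases at rate at
least `Δ₀ R` as long as it stays above `R` (`le_sub_of_le_on`). Being nonnegative, it must
reach the level `R` at some time, and it cannot exceed `R` afterwards: consider the last time before a
violation at which `x ≤ R`. So `x ≤ R` eventually, which bounds the limsup.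
-/

open MeasureTheory

/-- If `y` is at least the root `(c/E)^{1/(q−p)}` of `c y^p = E y^q`, then the term of higher degree
dominates. -/
lemma mul_rpow_le_of_root_le {c E p q y : ℝ} (hc : 0 < c) (hE : 0 < E) (hpq : p < q)
    (hy : (c / E) ^ (1 / (q - p)) ≤ y) : c * y ^ p ≤ E * y ^ q := by
  have hroot : 0 < (c / E) ^ (1 / (q - p)) := Real.rpow_pos_of_pos (div_pos hc hE) _
  have hy0 : 0 < y := hroot.trans_le hy
  have hqp : 0 < q - p := sub_pos.2 hpq
  have h1 : c / E ≤ y ^ (q - p) := by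
    have := Real.rpow_le_rpow hroot.le hy hqp.le
    rwa [← Real.rpow_mul (div_pos hc hE).le, one_div_mul_cancel hqp.ne', Real.rpow_one] at this
  have h2 : y ^ q = y ^ (q - p) * y ^ p := by
    rw [← Real.rpow_add hy0]; congr 1; ring
  rw [div_le_iff₀ hE] at h1
  rw [h2]
  have := mul_le_mul_of_nonneg_right h1 (Real.rpow_pos_of_pos hy0 p).le
  linarith

lemma rhs_le_neg {Δ₀ F E n₁ n₂ y : ℝ} (hΔ₀ : 0 < Δ₀) (hF : 0 < F) (hE : 0 < E)
    (hn₁ : 1 < n₁) (hn₁₂ : n₁ < n₂)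
    (hy : (4 * Δ₀ / E) ^ (1 / (n₂ - 1)) + (2 * F / E) ^ (1 / (n₂ - n₁)) ≤ y) :
    Δ₀ * y + F * y ^ n₁ - E * y ^ n₂ ≤
      -(Δ₀ * ((4 * Δ₀ / E) ^ (1 / (n₂ - 1)) + (2 * F / E) ^ (1 / (n₂ - n₁)))) := by
  have hA : 0 < (4 * Δ₀ / E) ^ (1 / (n₂ - 1)) := by positivity
  have hB : 0 < (2 * F / E) ^ (1 / (n₂ - n₁)) := by positivity
  have h1 := mul_rpow_le_of_root_le (c := 4 * Δ₀) (p := 1) (y := y) (by positivity) hE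
    (hn₁.trans hn₁₂) (by linarith)
  have h2 := mul_rpow_le_of_root_le (c := 2 * F) (y := y) (by positivity) hE hn₁₂ (by linarith)
  rw [Real.rpow_one] at h1
  have h3 := mul_le_mul_of_nonneg_left hy hΔ₀.le
  linarith

/-- If the derivative is at most `-δ` wherever `x ≥ R`, then `x` drops at rate at least `δ` over any
interval on which it stays above `R`. -/
lemma le_sub_of_le_on {x x' : ℝ → ℝ} {R δ s t : ℝ} (hs : 0 ≤ s) (hst : s ≤ t)
    (hx'int : ∀ t, 0 ≤ t → IntervalIntegrable x' volume 0 t)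
    (hAC : ∀ t, 0 ≤ t → x t = x 0 + ∫ τ in (0:ℝ)..t, x' τ)
    (hdecr : ∀ᵐ t ∂volume, 0 ≤ t → R ≤ x t → x' t ≤ -δ)
    (hR : ∀ u ∈ Set.Ioc s t, R ≤ x u) : x t ≤ x s - δ * (t - s) := by
  have ht : 0 ≤ t := hs.trans hst
  have hsub : x t - x s = ∫ τ in s..t, x' τ := by
    rw [hAC t ht, hAC s hs, ← intervalIntegral.integral_interval_sub_left (hx'int t ht) (hx'int s hs)]
    ring
  have hle : ∫ τ in s..t, x' τ ≤ ∫ _ in s..t, -δ := by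
    rw [intervalIntegral.integral_of_le hst, intervalIntegral.integral_of_le hst]
    refine setIntegral_mono_on_ae ?_ (by simp) measurableSet_Ioc ?_
    · exact (intervalIntegrable_iff_integrableOn_Ioc_of_le hst).1
        ((hx'int s hs).symm.trans (hx'int t ht))
    · filter_upwards [hdecr] with u hu hmem
      exact hu (hs.trans hmem.1.le) (hR u hmem)
  rw [intervalIntegral.integral_const, smul_eq_mul] at hle
  linarith

/-- Absorbing-ball estimate for the scalar differential inequality
`x' ≤ Δ₀·x + F·x^{n₁} − E·x^{n₂}` with `1 < n₁ < n₂` and `Δ₀, F, E > 0`: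
any nonnegative absolutely continuous solution (encoded via the fundamental
theorem of calculus with an integrable a.e. derivative `x'`) satisfies
`limsup_{t→∞} x(t) ≤ (4Δ₀/E)^{1/(n₂−1)} + (2F/E)^{1/(n₂−n₁)}`. -/
theorem absorbing_ball_estimate
    (x x' : ℝ → ℝ) (Δ₀ F E n₁ n₂ : ℝ)
    (hΔ₀ : 0 < Δ₀) (hF : 0 < F) (hE : 0 < E)
    (hn₁ : 1 < n₁) (hn₁₂ : n₁ < n₂)
    (hx_nonneg : ∀ t, 0 ≤ t → 0 ≤ x t)
    (hx0 : 0 < x 0)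
    (hx'int : ∀ t, 0 ≤ t → IntervalIntegrable x' volume 0 t)
    (hAC : ∀ t, 0 ≤ t → x t = x 0 + ∫ τ in (0:ℝ)..t, x' τ)
    (hineq : ∀ᵐ t ∂volume, 0 ≤ t →
        x' t ≤ Δ₀ * x t + F * x t ^ n₁ - E * x t ^ n₂) :
    Filter.limsup x Filter.atTop ≤
      (4 * Δ₀ / E) ^ (1 / (n₂ - 1)) + (2 * F / E) ^ (1 / (n₂ - n₁)) := by
  set R := (4 * Δ₀ / E) ^ (1 / (n₂ - 1)) + (2 * F / E) ^ (1 / (n₂ - n₁)) with hRdef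
  have hRpos : 0 < R := by positivity
  have hδ : 0 < Δ₀ * R := mul_pos hΔ₀ hRpos
  have hdecr : ∀ᵐ t ∂volume, 0 ≤ t → R ≤ x t → x' t ≤ -(Δ₀ * R) := by
    filter_upwards [hineq] with t ht h0 hR
    exact (ht h0).trans (rhs_le_neg hΔ₀ hF hE hn₁ hn₁₂ hR)
  have hcont : ∀ T, 0 ≤ T → ContinuousOn x (Set.Icc 0 T) := by
    intro T hT
    have h := intervalIntegral.continuousOn_primitive_interval'
      (hx'int T hT) (Set.left_mem_uIcc)
    rw [Set.uIcc_of_le hT] at h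
    exact (continuousOn_const.add h).congr fun t ht => hAC t ht.1
  obtain ⟨t₀, ht₀, hxt₀⟩ : ∃ t₀, 0 ≤ t₀ ∧ x t₀ ≤ R := by
    by_contra! hcon
    -- At this time the linear upper bound `x 0 - Δ₀ R t` has dropped to zero.
    have hT : 0 ≤ x 0 / (Δ₀ * R) := by positivity
    have h := le_sub_of_le_on le_rfl hT hx'int hAC hdecr fun u hu => (hcon u hu.1.le).le
    rw [sub_zero, mul_div_cancel₀ _ hδ.ne'] at h
    linarith [hcon _ hT]
  have hstay : ∀ t, t₀ ≤ t → x t ≤ R := by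
    intro t ht
    have hclosed : IsClosed (Set.Icc t₀ t ∩ x ⁻¹' Set.Iic R) :=
      ((hcont t (ht₀.trans ht)).mono (Set.Icc_subset_Icc_left ht₀)).preimage_isClosed_of_isClosed
        isClosed_Icc isClosed_Iic
    obtain ⟨s, ⟨hs, hxs⟩, hmax⟩ :=
      (isCompact_Icc.of_isClosed_subset hclosed Set.inter_subset_left).exists_isGreatest
        ⟨t₀, ⟨le_rfl, ht⟩, hxt₀⟩
    have h := le_sub_of_le_on (ht₀.trans hs.1) hs.2 hx'int hAC hdecr fun u hu => by
      by_contra! hlt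
      exact hu.1.not_ge (hmax ⟨⟨hs.1.trans hu.1.le, hu.2⟩, hlt.le⟩)
    have h2 := mul_nonneg hδ.le (sub_nonneg.2 hs.2)
    have h3 : x s ≤ R := hxs
    linarith
  refine Filter.limsup_le_of_le ?_ ?_
  · exact Filter.isCoboundedUnder_le_of_eventually_le (x := 0) _
      ((Filter.eventually_ge_atTop 0).mono hx_nonneg)
  · exact (Filter.eventually_ge_atTop t₀).mono hstay
end

section
/- Let T > 0, let a, b : [0,T] → ℝ be measurable with 0 < a(t) ≤ b(t) for almost every t ∈ [0,T], let μ ∈ (0,1) and set α = 1 − μ. Assume the averages A₂α = (1/T)∫₀ᵀ a(t)^{2α} dt and A₂ = (1/T)∫₀ᵀ a(t)² dt are finite and strictly positive. Then (1/T)∫₀ᵀ (b(t)/a(t))^{2α/μ} dt ≥ (A₂α / A₂^{α})^{1/μ} = A₂α · (A₂α / A₂)^{α/μ}. -/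
/-!
Write `A` for the average of `a ^ 2` and `B` for the average of `a ^ (2 * α)`. The number `1` separates the two
sides of the inequality. Since `b / a ≥ 1` almost everywhere, the average of
`(b / a) ^ (2 * α / μ)` is at least `1`. On the other hand Jensen's inequality on the probability
space `[0, T]` gives `B ≤ A ^ α` (`avg_rpow_le_rpow_avg`), so `(B / A ^ α) ^ (1 / μ) ≤ 1`.
The equality of the two forms of the lower bound is exponent arithmetic, using `1 / μ = 1 + α / μ`.
-/

open MeasureTheory

/-- Jensen's inequality for the concave power `x ↦ x ^ α`, applied to `a ^ 2`. It follows by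
integrating the weighted AM-GM inequality `(a ^ 2 / A) ^ α ≤ α * (a ^ 2 / A) + (1 - α)`, where `A`
is the average of `a ^ 2`. -/
lemma avg_rpow_le_rpow_avg (T : ℝ) (hT : 0 < T) (a : ℝ → ℝ) (α : ℝ) (hα0 : 0 ≤ α) (hα1 : α ≤ 1)
    (ha : ∀ᵐ t ∂volume, t ∈ Set.Icc 0 T → 0 < a t)
    (hint2α : IntervalIntegrable (fun t => a t ^ (2 * α)) volume 0 T)
    (hint2 : IntervalIntegrable (fun t => a t ^ (2:ℝ)) volume 0 T)
    (hA : 0 < (1 / T) * ∫ t in (0:ℝ)..T, a t ^ (2:ℝ)) :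
    (1 / T) * ∫ t in (0:ℝ)..T, a t ^ (2 * α) ≤
      ((1 / T) * ∫ t in (0:ℝ)..T, a t ^ (2:ℝ)) ^ α := by
  obtain ⟨A, hAdef⟩ : ∃ A, A = (1 / T) * ∫ t in (0:ℝ)..T, a t ^ (2:ℝ) := ⟨_, rfl⟩
  rw [← hAdef] at hA ⊢
  have hI : ∫ t in (0:ℝ)..T, a t ^ (2:ℝ) = T * A := by rw [hAdef]; field_simp
  have hpt : ∀ᵐ t ∂volume.restrict (Set.Icc 0 T),
      a t ^ (2 * α) ≤ A ^ α * (α / A * a t ^ (2:ℝ) + (1 - α)) := by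
    rw [ae_restrict_iff' measurableSet_Icc]
    filter_upwards [ha] with t ht htm
    have hp := ht htm
    have h2 : 0 ≤ a t ^ (2:ℝ) := by positivity
    have hY := Real.geom_mean_le_arith_mean2_weighted hα0 (sub_nonneg.2 hα1)
      (div_nonneg h2 hA.le) zero_le_one (by ring)
    rw [Real.one_rpow, mul_one, mul_one, Real.div_rpow h2 hA.le, ← Real.rpow_mul hp.le,
      div_le_iff₀ (by positivity)] at hY
    calc a t ^ (2 * α) ≤ _ := hY
      _ = _ := by ring
  have hint : IntervalIntegrable (fun t => α / A * a t ^ (2:ℝ) + (1 - α)) volume 0 T :=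
    (hint2.const_mul _).add intervalIntegrable_const
  have hmono := intervalIntegral.integral_mono_ae_restrict hT.le hint2α (hint.const_mul (A ^ α)) hpt
  rw [intervalIntegral.integral_const_mul,
    intervalIntegral.integral_add (hint2.const_mul _) intervalIntegrable_const,
    intervalIntegral.integral_const_mul, hI, intervalIntegral.integral_const] at hmono
  rw [one_div, inv_mul_le_iff₀ hT]
  refine hmono.trans_eq ?_
  simp only [sub_zero, smul_eq_mul]
  field_simp
  ring

/-- Hölder-inequality lower bound at the heart of the good/bad-intervals theorem:
for measurable `a, b` with `0 < a ≤ b` a.e. on `[0,T]`, `μ ∈ (0,1)`, `α = 1 − μ`,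
and finite strictly positive averages `A₂α = (1/T)∫₀ᵀ a^{2α}` and
`A₂ = (1/T)∫₀ᵀ a²`, the time average of `(b/a)^{2α/μ}` (taken as a Lebesgue
integral, so that it may be infinite) is at least
`(A₂α / A₂^α)^{1/μ} = A₂α (A₂α/A₂)^{α/μ}`. -/
theorem holder_ratio_lower_bound
    (T : ℝ) (hT : 0 < T) (a b : ℝ → ℝ) (μ : ℝ) (hμ : μ ∈ Set.Ioo (0:ℝ) 1)
    (α : ℝ) (hα : α = 1 - μ)
    (ha_meas : Measurable a) (hb_meas : Measurable b)
    (hab : ∀ᵐ t ∂volume, t ∈ Set.Icc 0 T → 0 < a t ∧ a t ≤ b t)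
    (hint2α : IntervalIntegrable (fun t => a t ^ (2 * α)) volume 0 T)
    (hint2 : IntervalIntegrable (fun t => a t ^ (2:ℝ)) volume 0 T)
    (hA2α_pos : 0 < (1 / T) * ∫ t in (0:ℝ)..T, a t ^ (2 * α))
    (hA2_pos : 0 < (1 / T) * ∫ t in (0:ℝ)..T, a t ^ (2:ℝ)) :
    (ENNReal.ofReal
        ((((1 / T) * ∫ t in (0:ℝ)..T, a t ^ (2 * α)) /
            ((1 / T) * ∫ t in (0:ℝ)..T, a t ^ (2:ℝ)) ^ α) ^ (1 / μ)) ≤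
      (ENNReal.ofReal T)⁻¹ *
        ∫⁻ t in Set.Ioc (0:ℝ) T, ENNReal.ofReal ((b t / a t) ^ (2 * α / μ)) ∂volume)
    ∧ (((1 / T) * ∫ t in (0:ℝ)..T, a t ^ (2 * α)) /
          ((1 / T) * ∫ t in (0:ℝ)..T, a t ^ (2:ℝ)) ^ α) ^ (1 / μ) =
        ((1 / T) * ∫ t in (0:ℝ)..T, a t ^ (2 * α)) *
          (((1 / T) * ∫ t in (0:ℝ)..T, a t ^ (2 * α)) /
            ((1 / T) * ∫ t in (0:ℝ)..T, a t ^ (2:ℝ))) ^ (α / μ) := by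
  obtain ⟨hμ0, hμ1⟩ := hμ
  have hα0 : 0 < α := by linarith
  have hJ := avg_rpow_le_rpow_avg T hT a α hα0.le (by linarith)
    (hab.mono fun t h ht => (h ht).1) hint2α hint2 hA2_pos
  generalize (1 / T) * ∫ t in (0:ℝ)..T, a t ^ (2 * α) = B at *
  generalize (1 / T) * ∫ t in (0:ℝ)..T, a t ^ (2:ℝ) = A at *
  constructor
  · calc ENNReal.ofReal ((B / A ^ α) ^ (1 / μ)) ≤ 1 := by
          rw [ENNReal.ofReal_le_one]
          exact Real.rpow_le_one (by positivity) (div_le_one_of_le₀ hJ (by positivity))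
            (by positivity)
      _ = (ENNReal.ofReal T)⁻¹ * ∫⁻ _ in Set.Ioc (0:ℝ) T, 1 ∂volume := by
          rw [setLIntegral_one, Real.volume_Ioc, sub_zero,
            ENNReal.inv_mul_cancel (by simpa using hT) ENNReal.ofReal_ne_top]
      _ ≤ _ := by
          gcongr 1
          refine lintegral_mono_ae ?_
          rw [ae_restrict_iff' measurableSet_Ioc]
          filter_upwards [hab] with t ht htm
          obtain ⟨h1, h2⟩ := ht (Set.Ioc_subset_Icc_self htm)
          rw [ENNReal.one_le_ofReal]
          exact Real.one_le_rpow ((one_le_div h1).2 h2) (by positivity)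
  · have hexp : 1 / μ = 1 + α / μ := by
      rw [hα]; field_simp; ring
    rw [Real.div_rpow hA2α_pos.le (by positivity), ← Real.rpow_mul hA2_pos.le,
      Real.div_rpow hA2α_pos.le hA2_pos.le, mul_one_div, hexp, Real.rpow_add hA2α_pos,
      Real.rpow_one, mul_div_assoc]
end
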